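/- Let T > 0, n, m ∈ ℕ, L_F > 0, and let x̃ : [0,T] → ℝⁿ be differentiable and ũ : [0,T] → ℝᵐ continuous, with ‖x̃'(t)‖ ≤ L_F(‖x̃(t)‖ + ‖ũ(t)‖) for all t ∈ [0,T]. Let Q : ℝⁿ → ℝ, R : ℝᵐ → ℝ, V : ℝⁿ → ℝ be continuous with α_Q‖x‖² ≤ Q(x), α_R‖u‖² ≤ R(u), 0 ≤ V(x) for all x, u, where α_Q, α_R > 0. Define Ṽ(s) = ∫ₛᵀ (Q(x̃(t)) + R(ũ(t))) dt + V(x̃(T)). Then for every δ ∈ (0,T], every s' with 0 ≤ s' ≤ T − δ, and every s with s' ≤ s ≤ T, ‖x̃(s)‖² ≤ (1/α_Q)·(6L_F + 2L_F α_Q/α_R + 2/δ)·Ṽ(s'). -/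

import Mathlib

open Set

/-!
Since `|(‖x‖²)'| ≤ 2‖x‖‖x'‖`, the velocity bound and `2ab ≤ a² + b²` give
`|(‖x‖²)'| ≤ L (3‖x‖² + ‖u‖²)`, which coercivity dominates by `L (3/α_Q + 1/α_R)` times the running
cost. Hence `‖x‖²` oscillates by at most a multiple of the cost. It cannot be large throughout
either, because its average is at most the cost divided by `α_Q` and the length of the interval,
which is at least `δ`. Adding the two estimates bounds `‖x‖²` at every point.
-/

open MeasureTheory

section Oscillation

variable {E : Type*} [NormedAddCommGroup E] [NormedSpace ℝ E] {a b c d : ℝ} {φ : ℝ → ℝ}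

lemma norm_sub_le_integral_of_norm_deriv_le_of_mem_Icc {f : ℝ → E}
    (hfc : ContinuousOn f (Icc a b)) (hfd : DifferentiableOn ℝ f (Ioo a b))
    (hfφ : ∀ᵐ t, t ∈ Ioo a b → ‖deriv f t‖ ≤ φ t) (hφ : IntervalIntegrable φ volume a b)
    (hc : c ∈ Icc a b) (hd : d ∈ Icc a b) :
    ‖f d - f c‖ ≤ ∫ t in a..b, φ t := by
  wlog hcd : c ≤ d generalizing c d
  · rw [norm_sub_rev]
    exact this hd hc (le_of_not_ge hcd)
  have hab : a ≤ b := hc.1.trans hc.2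
  have hIoo : Ioo c d ⊆ Ioo a b := Ioo_subset_Ioo hc.1 hd.2
  have hφ_nonneg : 0 ≤ᵐ[volume.restrict (Ioc a b)] φ := by
    rw [← Measure.restrict_congr_set Ioo_ae_eq_Ioc, Filter.EventuallyLE,
      ae_restrict_iff' measurableSet_Ioo]
    exact hfφ.mono fun t ht htab => (norm_nonneg _).trans (ht htab)
  calc ‖f d - f c‖
      ≤ ∫ t in c..d, φ t :=
        norm_sub_le_integral_of_norm_deriv_le_of_le hcd (hfc.mono (Icc_subset_Icc hc.1 hd.2))
          (hfd.mono hIoo) (hfφ.mono fun t ht htcd => ht (hIoo htcd))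
          (hφ.mono_set (by rw [uIcc_of_le hcd, uIcc_of_le hab]; exact Icc_subset_Icc hc.1 hd.2))
    _ ≤ ∫ t in a..b, φ t :=
        intervalIntegral.integral_mono_interval hc.1 hcd hd.2 hφ_nonneg hφ

lemma le_average_add_integral_of_norm_deriv_le {f : ℝ → ℝ} (hab : a < b)
    (hfc : ContinuousOn f (Icc a b)) (hfd : DifferentiableOn ℝ f (Ioo a b))
    (hfφ : ∀ᵐ t, t ∈ Ioo a b → ‖deriv f t‖ ≤ φ t) (hφ : IntervalIntegrable φ volume a b)
    (hd : d ∈ Icc a b) :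
    f d ≤ (⨍ t in a..b, f t) + ∫ t in a..b, φ t := by
  have hosc : ∀ c ∈ Icc a b, f d - ∫ t in a..b, φ t ≤ f c := fun c hc =>
    sub_le_comm.1 <| (Real.le_norm_self _).trans <|
      norm_sub_le_integral_of_norm_deriv_le_of_mem_Icc hfc hfd hfφ hφ hc hd
  have hint : ∫ _ in a..b, (f d - ∫ t in a..b, φ t) ≤ ∫ c in a..b, f c :=
    intervalIntegral.integral_mono_on hab.le intervalIntegrable_const
      (hfc.intervalIntegrable_of_Icc hab.le) hosc
  rw [intervalIntegral.integral_const, smul_eq_mul] at hint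
  rw [← sub_le_iff_le_add, interval_average_eq_div, le_div_iff₀' (sub_pos.2 hab)]
  exact hint

end Oscillation

lemma norm_deriv_norm_sq_le {E : Type*} [NormedAddCommGroup E] [InnerProductSpace ℝ E]
    {x : ℝ → E} {t : ℝ} (hx : DifferentiableAt ℝ x t) :
    ‖deriv (fun t => ‖x t‖ ^ 2) t‖ ≤ 2 * (‖x t‖ * ‖deriv x t‖) := by
  rw [hx.hasDerivAt.norm_sq.deriv, norm_mul, Real.norm_two]
  gcongr
  exact norm_inner_le_norm _ _

lemma two_mul_mul_le_of_le_mul_add {L y v w : ℝ} (hL : 0 ≤ L) (hy : 0 ≤ y)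
    (hv : v ≤ L * (y + w)) :
    2 * (y * v) ≤ L * (3 * y ^ 2 + w ^ 2) :=
  calc 2 * (y * v)
      ≤ 2 * (y * (L * (y + w))) := by gcongr
    _ = L * (2 * y ^ 2 + 2 * y * w) := by ring
    _ ≤ L * (2 * y ^ 2 + (y ^ 2 + w ^ 2)) := by gcongr; exact two_mul_le_add_sq y w
    _ = L * (3 * y ^ 2 + w ^ 2) := by ring

section RunningCost

/-- The running cost `Q(x(t)) + R(u(t))` along the trajectory `(x, u)`, as a function of time. -/
def runningCost {E F : Type*} (Q : E → ℝ) (R : F → ℝ) (x : ℝ → E) (u : ℝ → F) (t : ℝ) : ℝ :=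
  Q (x t) + R (u t)

/-- The cost-to-go `Ṽ(s)` along the trajectory `(x, u)` up to the horizon `T`, with terminal
cost `V`. -/
noncomputable def costToGo {E F : Type*} (Q : E → ℝ) (R : F → ℝ) (V : E → ℝ) (T : ℝ)
    (x : ℝ → E) (u : ℝ → F) (s : ℝ) : ℝ :=
  (∫ t in s..T, runningCost Q R x u t) + V (x T)

lemma continuousOn_runningCost {E F : Type*} [TopologicalSpace E] [TopologicalSpace F]
    {Q : E → ℝ} {R : F → ℝ} {x : ℝ → E} {u : ℝ → F} {S : Set ℝ}
    (hQ : Continuous Q) (hR : Continuous R) (hx : ContinuousOn x S) (hu : ContinuousOn u S) :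
    ContinuousOn (runningCost Q R x u) S :=
  (hQ.comp_continuousOn hx).add (hR.comp_continuousOn hu)

variable {E F : Type*} [Norm E] [Norm F] {αQ αR : ℝ}
  {Q : E → ℝ} {R : F → ℝ} {x : ℝ → E} {u : ℝ → F}

lemma runningCost_nonneg (hαQ : 0 ≤ αQ) (hαR : 0 ≤ αR)
    (hQ : ∀ y, αQ * ‖y‖ ^ 2 ≤ Q y) (hR : ∀ v, αR * ‖v‖ ^ 2 ≤ R v) (t : ℝ) :
    0 ≤ runningCost Q R x u t :=
  add_nonneg ((by positivity : 0 ≤ αQ * ‖x t‖ ^ 2).trans (hQ (x t)))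
    ((by positivity : 0 ≤ αR * ‖u t‖ ^ 2).trans (hR (u t)))

lemma norm_state_sq_le_runningCost_div (hαQ : 0 < αQ) (hαR : 0 ≤ αR)
    (hQ : ∀ y, αQ * ‖y‖ ^ 2 ≤ Q y) (hR : ∀ v, αR * ‖v‖ ^ 2 ≤ R v) (t : ℝ) :
    ‖x t‖ ^ 2 ≤ runningCost Q R x u t / αQ := by
  have hR_nonneg : 0 ≤ R (u t) := (by positivity : 0 ≤ αR * ‖u t‖ ^ 2).trans (hR (u t))
  rw [le_div_iff₀' hαQ]
  exact (hQ (x t)).trans (le_add_of_nonneg_right hR_nonneg)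

lemma norm_input_sq_le_runningCost_div (hαQ : 0 ≤ αQ) (hαR : 0 < αR)
    (hQ : ∀ y, αQ * ‖y‖ ^ 2 ≤ Q y) (hR : ∀ v, αR * ‖v‖ ^ 2 ≤ R v) (t : ℝ) :
    ‖u t‖ ^ 2 ≤ runningCost Q R x u t / αR := by
  have hQ_nonneg : 0 ≤ Q (x t) := (by positivity : 0 ≤ αQ * ‖x t‖ ^ 2).trans (hQ (x t))
  rw [le_div_iff₀' hαR]
  exact (hR (u t)).trans (le_add_of_nonneg_left hQ_nonneg)

end RunningCost

section Trajectory

variable {E F : Type*} [NormedAddCommGroup E] [InnerProductSpace ℝ E] [Norm F]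
  {αQ αR L T a s : ℝ} {Q : E → ℝ} {R : F → ℝ} {x : ℝ → E} {u : ℝ → F}

lemma norm_deriv_norm_sq_le_mul_runningCost {t : ℝ} (hL : 0 ≤ L) (hαQ : 0 < αQ) (hαR : 0 < αR)
    (hx : DifferentiableAt ℝ x t) (hx' : ‖deriv x t‖ ≤ L * (‖x t‖ + ‖u t‖))
    (hQ : ∀ y, αQ * ‖y‖ ^ 2 ≤ Q y) (hR : ∀ v, αR * ‖v‖ ^ 2 ≤ R v) :
    ‖deriv (fun t => ‖x t‖ ^ 2) t‖ ≤ L * (3 / αQ + 1 / αR) * runningCost Q R x u t :=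
  calc ‖deriv (fun t => ‖x t‖ ^ 2) t‖
      ≤ 2 * (‖x t‖ * ‖deriv x t‖) := norm_deriv_norm_sq_le hx
    _ ≤ L * (3 * ‖x t‖ ^ 2 + ‖u t‖ ^ 2) := two_mul_mul_le_of_le_mul_add hL (norm_nonneg _) hx'
    _ ≤ L * (3 * (runningCost Q R x u t / αQ) + runningCost Q R x u t / αR) := by
        gcongr
        · exact norm_state_sq_le_runningCost_div hαQ hαR.le hQ hR t
        · exact norm_input_sq_le_runningCost_div hαQ.le hαR hQ hR t
    _ = L * (3 / αQ + 1 / αR) * runningCost Q R x u t := by ring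

lemma norm_state_sq_le_mul_integral_runningCost (hL : 0 ≤ L) (hαQ : 0 < αQ) (hαR : 0 < αR)
    (haT : a < T) (hxc : ContinuousOn x (Icc a T)) (hxd : DifferentiableOn ℝ x (Ioo a T))
    (hx' : ∀ᵐ t, t ∈ Ioo a T → ‖deriv x t‖ ≤ L * (‖x t‖ + ‖u t‖))
    (hQ : ∀ y, αQ * ‖y‖ ^ 2 ≤ Q y) (hR : ∀ v, αR * ‖v‖ ^ 2 ≤ R v)
    (hint : IntervalIntegrable (runningCost Q R x u) volume a T) (hs : s ∈ Icc a T) :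
    ‖x s‖ ^ 2 ≤ (1 / αQ) * (3 * L + L * αQ / αR + 1 / (T - a)) *
      ∫ t in a..T, runningCost Q R x u t := by
  have hsqc : ContinuousOn (fun t => ‖x t‖ ^ 2) (Icc a T) := hxc.norm.pow 2
  have hderiv : ∀ᵐ t, t ∈ Ioo a T →
      ‖deriv (fun t => ‖x t‖ ^ 2) t‖ ≤ L * (3 / αQ + 1 / αR) * runningCost Q R x u t :=
    hx'.mono fun t ht hta => norm_deriv_norm_sq_le_mul_runningCost hL hαQ hαR
      (hxd.differentiableAt (Ioo_mem_nhds hta.1 hta.2)) (ht hta) hQ hR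
  have havg : ⨍ t in a..T, ‖x t‖ ^ 2 ≤ (∫ t in a..T, runningCost Q R x u t) / αQ / (T - a) := by
    rw [interval_average_eq_div]
    refine div_le_div_of_nonneg_right ?_ (sub_nonneg.2 haT.le)
    rw [← intervalIntegral.integral_div]
    exact intervalIntegral.integral_mono_on haT.le (hsqc.intervalIntegrable_of_Icc haT.le)
      (hint.div_const αQ) fun t _ => norm_state_sq_le_runningCost_div hαQ hαR.le hQ hR t
  calc ‖x s‖ ^ 2
      ≤ (⨍ t in a..T, ‖x t‖ ^ 2) +
          ∫ t in a..T, L * (3 / αQ + 1 / αR) * runningCost Q R x u t :=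
        le_average_add_integral_of_norm_deriv_le haT hsqc (hxd.norm_sq ℝ) hderiv
          (hint.const_mul _) hs
    _ ≤ (∫ t in a..T, runningCost Q R x u t) / αQ / (T - a) +
          L * (3 / αQ + 1 / αR) * ∫ t in a..T, runningCost Q R x u t := by
        rw [intervalIntegral.integral_const_mul]
        gcongr
    _ = (1 / αQ) * (3 * L + L * αQ / αR + 1 / (T - a)) *
          ∫ t in a..T, runningCost Q R x u t := by
        have hTa : T - a ≠ 0 := (sub_pos.2 haT).ne'
        field_simp
        ring

theorem stmt3_general {V : E → ℝ} {δ : ℝ} (hL : 0 ≤ L) (hαQ : 0 < αQ) (hαR : 0 < αR)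
    (hδ : 0 < δ) (haδ : a ≤ T - δ)
    (hxc : ContinuousOn x (Icc a T)) (hxd : DifferentiableOn ℝ x (Ioo a T))
    (hx' : ∀ᵐ t, t ∈ Ioo a T → ‖deriv x t‖ ≤ L * (‖x t‖ + ‖u t‖))
    (hQ : ∀ y, αQ * ‖y‖ ^ 2 ≤ Q y) (hR : ∀ v, αR * ‖v‖ ^ 2 ≤ R v) (hV : 0 ≤ V (x T))
    (hint : IntervalIntegrable (runningCost Q R x u) volume a T) (hs : s ∈ Icc a T) :
    ‖x s‖ ^ 2 ≤ (1 / αQ) * (3 * L + L * αQ / αR + 1 / δ) * costToGo Q R V T x u a := by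
  have hcost_nonneg : 0 ≤ ∫ t in a..T, runningCost Q R x u t :=
    intervalIntegral.integral_nonneg (hs.1.trans hs.2) fun t _ =>
      runningCost_nonneg hαQ.le hαR.le hQ hR t
  calc ‖x s‖ ^ 2
      ≤ (1 / αQ) * (3 * L + L * αQ / αR + 1 / (T - a)) * ∫ t in a..T, runningCost Q R x u t :=
        norm_state_sq_le_mul_integral_runningCost hL hαQ hαR (by linarith) hxc hxd hx' hQ hR
          hint hs
    _ ≤ (1 / αQ) * (3 * L + L * αQ / αR + 1 / δ) * costToGo Q R V T x u a := by
        gcongr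
        · linarith
        · exact le_add_of_nonneg_right hV

end Trajectory

/-- Lemma 1 (case without positive-definite terminal cost, `V ≥ 0`): along a trajectory
whose velocity is bounded by `L_F(‖x̃‖ + ‖ũ‖)`, for every `δ ∈ (0,T]`, every
`s' ≤ T − δ` and every `s ∈ [s', T]`, the squared state norm at `s` is bounded by
`(1/α_Q)(6L_F + 2L_F α_Q/α_R + 2/δ)` times the cost-to-go `Ṽ(s')`. -/
theorem stmt3
    (n m : ℕ) (T LF : ℝ) (hT : 0 < T) (hLF : 0 < LF)
    (αQ αR : ℝ) (hαQ : 0 < αQ) (hαR : 0 < αR)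
    (xt : ℝ → EuclideanSpace ℝ (Fin n)) (ut : ℝ → EuclideanSpace ℝ (Fin m))
    (hxdiff : ∀ t ∈ Icc (0:ℝ) T, DifferentiableAt ℝ xt t)
    (hut : ContinuousOn ut (Icc 0 T))
    (hder : ∀ t ∈ Icc (0:ℝ) T, ‖deriv xt t‖ ≤ LF * (‖xt t‖ + ‖ut t‖))
    (Q : EuclideanSpace ℝ (Fin n) → ℝ) (R : EuclideanSpace ℝ (Fin m) → ℝ)
    (V : EuclideanSpace ℝ (Fin n) → ℝ)
    (hQc : Continuous Q) (hRc : Continuous R) (hVc : Continuous V)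
    (hQ : ∀ x, αQ * ‖x‖ ^ 2 ≤ Q x)
    (hR : ∀ u, αR * ‖u‖ ^ 2 ≤ R u)
    (hV : ∀ x, 0 ≤ V x)
    (Vt : ℝ → ℝ)
    (hVt : ∀ s, Vt s = (∫ t in s..T, (Q (xt t) + R (ut t))) + V (xt T)) :
    ∀ δ s' s : ℝ, 0 < δ → δ ≤ T → 0 ≤ s' → s' ≤ T - δ → s' ≤ s → s ≤ T →
      ‖xt s‖ ^ 2 ≤ (1 / αQ) * (6 * LF + 2 * LF * αQ / αR + 2 / δ) * Vt s' := by
  intro δ s' s hδ _ hs' hs'δ hs's hsT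
  have hsub : Icc s' T ⊆ Icc 0 T := Icc_subset_Icc_left hs'
  have hxd : DifferentiableOn ℝ xt (Icc s' T) := fun t ht =>
    (hxdiff t (hsub ht)).differentiableWithinAt
  have hint : IntervalIntegrable (runningCost Q R xt ut) volume s' T :=
    (continuousOn_runningCost hQc hRc hxd.continuousOn (hut.mono hsub)).intervalIntegrable_of_Icc
      (hs's.trans hsT)
  have hbound := stmt3_general hLF.le hαQ hαR hδ hs'δ hxd.continuousOn
    (hxd.mono Ioo_subset_Icc_self)
    (.of_forall fun t ht => hder t (hsub (Ioo_subset_Icc_self ht))) hQ hR (hV (xt T)) hint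
    ⟨hs's, hsT⟩
  rw [show Vt s' = costToGo Q R V T xt ut s' from hVt s']
  calc ‖xt s‖ ^ 2
      ≤ 2 * ((1 / αQ) * (3 * LF + LF * αQ / αR + 1 / δ) * costToGo Q R V T xt ut s') := by
        linarith [sq_nonneg ‖xt s‖]
    _ = (1 / αQ) * (6 * LF + 2 * LF * αQ / αR + 2 / δ) * costToGo Q R V T xt ut s' := by ring
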